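/- Under the time evolution a_p(t) = a_p(0) e^{t/ζ_p}, for all integers i, j, every integer k ≥ 0 and every t ∈ ℝ, the bimoment determinant F_k^{(i,j)}(t) is differentiable in t and (d/dt) F_k^{(i,j)}(t) = − E_{k+1}^{(i,j)}(t). -/

import Mathlib

/-!
Since `(1 / ζ_p + 1 / ζ_q) / (ζ_p + ζ_q) = ζ_p⁻¹ ζ_q⁻¹`, the flow `a_p' = a_p / ζ_p` gives
`I_{i,j}' = α_{i-1} α_{j-1}`: the matrix of bimoments has a derivative of rank one, `u vᵀ`.
Jacobi's formula turns the derivative of its determinant into `vᵀ (adj M) u`, which is minus the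
determinant of `M` bordered by `u`, `v` and the corner `0`.
-/

open Finset

/-- Single moments `α_i = Σ_p ζ_p^i a_p`. -/
noncomputable def alphaM (n : ℕ) (ζ a : Fin n → ℝ) (i : ℤ) : ℝ :=
  ∑ p : Fin n, ζ p ^ i * a p

/-- Bimoments `I_{i,j} = Σ_p Σ_q ζ_p^i ζ_q^j / (ζ_p + ζ_q) a_p a_q`. -/
noncomputable def Imom (n : ℕ) (ζ a : Fin n → ℝ) (i j : ℤ) : ℝ :=
  ∑ p : Fin n, ∑ q : Fin n, ζ p ^ i * ζ q ^ j / (ζ p + ζ q) * (a p * a q)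

/-- `F_k^{(i,j)} = det (I_{i+r,j+s})_{0 ≤ r,s ≤ k-1}`, with `F_0 = 1` and `F_k = 0` for `k < 0`. -/
noncomputable def Fdet (n : ℕ) (ζ a : Fin n → ℝ) (i j k : ℤ) : ℝ :=
  if k < 0 then 0
  else Matrix.det (Matrix.of fun r s : Fin k.toNat =>
    Imom n ζ a (i + ((r : ℕ) : ℤ)) (j + ((s : ℕ) : ℤ)))

/-- `G_k^{(i,j)}`: first column `(α_{i-1}, …, α_{i+k-2})ᵀ`, remaining block
`(I_{i+r,j+s})_{0 ≤ r ≤ k-1, 0 ≤ s ≤ k-2}`; `G_1 = α_{i-1}` and `G_k = 0` for `k < 1`. -/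
noncomputable def Gdet (n : ℕ) (ζ a : Fin n → ℝ) (i j k : ℤ) : ℝ :=
  if k < 1 then 0
  else Matrix.det (Matrix.of fun r s : Fin k.toNat =>
    if (s : ℕ) = 0 then alphaM n ζ a (i - 1 + ((r : ℕ) : ℤ))
    else Imom n ζ a (i + ((r : ℕ) : ℤ)) (j + (((s : ℕ) - 1 : ℕ) : ℤ)))

/-- `E_k^{(i,j)}`: `(1,1)` entry `0`, first row `(0, α_{j-1}, …, α_{j+k-3})`, first column
`(0, α_{i-1}, …, α_{i+k-3})ᵀ`, remaining block `(I_{i+r,j+s})_{0 ≤ r,s ≤ k-2}`;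
`E_k = 0` for `k < 2`. -/
noncomputable def Edet (n : ℕ) (ζ a : Fin n → ℝ) (i j k : ℤ) : ℝ :=
  if k < 2 then 0
  else Matrix.det (Matrix.of fun r s : Fin k.toNat =>
    if (r : ℕ) = 0 then
      (if (s : ℕ) = 0 then 0 else alphaM n ζ a (j - 1 + (((s : ℕ) - 1 : ℕ) : ℤ)))
    else if (s : ℕ) = 0 then alphaM n ζ a (i - 1 + (((r : ℕ) - 1 : ℕ) : ℤ))
    else Imom n ζ a (i + (((r : ℕ) - 1 : ℕ) : ℤ)) (j + (((s : ℕ) - 1 : ℕ) : ℤ)))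

/-- Time-dependent weights `a_p(t) = a_p(0) e^{t/ζ_p}`. -/
noncomputable def aT (n : ℕ) (ζ a0 : Fin n → ℝ) (t : ℝ) : Fin n → ℝ :=
  fun p => a0 p * Real.exp (t / ζ p)

section BorderedDeterminant

open Matrix

variable {R ι : Type*}

/-- The square matrix `M` bordered by a last column `u`, a last row `v` and the corner `c`. In
`E_k` the border comes first; moving it last permutes rows and columns alike, which preserves the
determinant. -/
def borderedMatrix (M : Matrix ι ι R) (u v : ι → R) (c : R) : Matrix (ι ⊕ Unit) (ι ⊕ Unit) R :=
  fromBlocks M (replicateCol Unit u) (replicateRow Unit v) (of fun _ _ => c)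

variable [CommRing R] [Fintype ι] [DecidableEq ι]

theorem det_updateRow_eq_vecMul_adjugate (M : Matrix ι ι R) (i : ι) (v : ι → R) :
    (M.updateRow i v).det = (v ᵥ* adjugate M) i := by
  rw [← cramer_transpose_apply, cramer_eq_adjugate_mulVec, ← adjugate_transpose, mulVec_transpose]

theorem adjugate_borderedMatrix_inr_inr (M : Matrix ι ι R) (u v : ι → R) (c : R) :
    adjugate (borderedMatrix M u v c) (Sum.inr ()) (Sum.inr ()) = M.det := by
  have hrow : (borderedMatrix M u v c).updateRow (Sum.inr ()) (Pi.single (Sum.inr ()) 1) =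
      fromBlocks M (replicateCol Unit u) 0 1 := by
    ext (i | i) (j | j) <;> simp [borderedMatrix, updateRow_apply]
  rw [adjugate_apply, hrow, det_fromBlocks_zero₂₁, det_one, mul_one]

theorem adjugate_borderedMatrix_inr_inl (M : Matrix ι ι R) (u v : ι → R) (c : R) (i : ι) :
    adjugate (borderedMatrix M u v c) (Sum.inr ()) (Sum.inl i) = -(v ᵥ* adjugate M) i := by
  set B := (borderedMatrix M u v c).updateRow (Sum.inl i) (Pi.single (Sum.inr ()) 1) with hB
  have hswap : B.submatrix (Equiv.swap (Sum.inl i) (Sum.inr ())) id =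
      fromBlocks (M.updateRow i v) (replicateCol Unit (Function.update u i c)) 0 1 := by
    ext (k | k) (j | j)
    · by_cases hk : k = i <;> simp [hB, borderedMatrix, hk, Equiv.swap_apply_of_ne_of_ne]
    · by_cases hk : k = i <;> simp [hB, borderedMatrix, hk, Equiv.swap_apply_of_ne_of_ne]
    · simp [hB]
    · simp [hB]
  have hsign : (B.submatrix (Equiv.swap (Sum.inl i) (Sum.inr ())) id).det = -B.det := by
    rw [det_permute, Equiv.Perm.sign_swap Sum.inl_ne_inr]
    simp
  calc adjugate (borderedMatrix M u v c) (Sum.inr ()) (Sum.inl i)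
      = B.det := adjugate_apply _ _ _
    _ = -(B.submatrix (Equiv.swap (Sum.inl i) (Sum.inr ())) id).det := by rw [hsign, neg_neg]
    _ = -(M.updateRow i v).det := by rw [hswap, det_fromBlocks_zero₂₁, det_one, mul_one]
    _ = -(v ᵥ* adjugate M) i := by rw [det_updateRow_eq_vecMul_adjugate]

theorem det_borderedMatrix (M : Matrix ι ι R) (u v : ι → R) (c : R) :
    (borderedMatrix M u v c).det = c * M.det - v ⬝ᵥ adjugate M *ᵥ u := by
  calc (borderedMatrix M u v c).det
      = ∑ i, u i * adjugate (borderedMatrix M u v c) (Sum.inr ()) (Sum.inl i)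
          + c * adjugate (borderedMatrix M u v c) (Sum.inr ()) (Sum.inr ()) := by
        rw [det_eq_sum_mul_adjugate_col _ (Sum.inr ()), Fintype.sum_sum_type,
          univ_unique (α := Unit), sum_singleton]
        rfl
    _ = -(u ⬝ᵥ v ᵥ* adjugate M) + c * M.det := by
        simp only [adjugate_borderedMatrix_inr_inl, adjugate_borderedMatrix_inr_inr, mul_neg,
          sum_neg_distrib, dotProduct]
    _ = c * M.det - v ⬝ᵥ adjugate M *ᵥ u := by
        rw [neg_add_eq_sub, dotProduct_comm, dotProduct_mulVec]

end BorderedDeterminant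

section DerivDeterminant

open Matrix

variable {𝕜 R ι : Type*} [NontriviallyNormedField 𝕜] [NormedCommRing R] [NormedAlgebra 𝕜 R]
  [Fintype ι] [DecidableEq ι] {M : 𝕜 → Matrix ι ι R} {t : 𝕜}

theorem hasDerivAt_det_trace_adjugate_mul {M' : Matrix ι ι R}
    (hM : ∀ i j, HasDerivAt (fun s => M s i j) (M' i j) t) :
    HasDerivAt (fun s => (M s).det) (trace (adjugate (M t) * M')) t := by
  let detRows : ContinuousMultilinearMap 𝕜 (fun _ : ι => ι → R) R :=
    { toMultilinearMap := (detRowAlternating (R := R)).toMultilinearMap.restrictScalars 𝕜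
      cont := Continuous.matrix_det (A := fun x : ι → ι → R => Matrix.of x) continuous_id }
  have hrows : HasDerivAt (fun s i => M s i) (fun i => M' i) t :=
    hasDerivAt_pi.2 fun i => hasDerivAt_pi.2 (hM i)
  refine ((detRows.hasFDerivAt (M t)).comp_hasDerivAt t hrows).congr_deriv ?_
  calc detRows.linearDeriv (M t) M'
      = ∑ i, ((M t).updateRow i (M' i)).det := detRows.linearDeriv_apply _ _
    _ = trace (M' * adjugate (M t)) :=
        sum_congr rfl fun i _ => det_updateRow_eq_vecMul_adjugate (M t) i (M' i)
    _ = trace (adjugate (M t) * M') := trace_mul_comm _ _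

theorem hasDerivAt_det_of_vecMulVec {u v : ι → R}
    (hM : ∀ i j, HasDerivAt (fun s => M s i j) (u i * v j) t) :
    HasDerivAt (fun s => (M s).det) (-(borderedMatrix (M t) u v 0).det) t := by
  refine (hasDerivAt_det_trace_adjugate_mul (M' := vecMulVec u v) hM).congr_deriv ?_
  rw [det_borderedMatrix, mul_vecMulVec, trace_vecMulVec, dotProduct_comm]
  ring

end DerivDeterminant

section Moments

open Matrix

variable {n : ℕ} {ζ : Fin n → ℝ}

/-- The moments `α_i, …, α_{i+k-1}` as a vector. -/
noncomputable def momentVec (ζ a : Fin n → ℝ) (i : ℤ) (k : ℕ) : Fin k → ℝ :=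
  fun r => alphaM n ζ a (i + (r : ℕ))

/-- The `k × k` block `(I_{i+r,j+s})` of bimoments, whose determinant is `F_k^{(i,j)}`. -/
noncomputable def bimomentMatrix (ζ a : Fin n → ℝ) (i j : ℤ) (k : ℕ) : Matrix (Fin k) (Fin k) ℝ :=
  of fun r s => Imom n ζ a (i + (r : ℕ)) (j + (s : ℕ))

theorem Fdet_natCast (ζ a : Fin n → ℝ) (i j : ℤ) (k : ℕ) :
    Fdet n ζ a i j k = (bimomentMatrix ζ a i j k).det :=
  if_neg (Int.natCast_nonneg k).not_gt

theorem Edet_natCast_add_one (ζ a : Fin n → ℝ) (i j : ℤ) (k : ℕ) :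
    Edet n ζ a i j (k + 1) = (borderedMatrix (bimomentMatrix ζ a i j k)
      (momentVec ζ a (i - 1) k) (momentVec ζ a (j - 1) k) 0).det := by
  rcases k.eq_zero_or_pos with rfl | hk
  · simp [Edet, det_borderedMatrix]
  · rw [Edet, if_neg (by omega),
      ← det_submatrix_equiv_self ((finSuccEquiv k).trans (Equiv.optionEquivSumPUnit (Fin k)))]
    congr 1
    ext r s
    cases r using Fin.cases <;> cases s using Fin.cases <;>
      simp [borderedMatrix, momentVec, bimomentMatrix]

theorem hasDerivAt_Imom {a : ℝ → Fin n → ℝ} {t : ℝ} (hζ : ∀ p q, ζ p + ζ q ≠ 0)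
    (ha : ∀ p, HasDerivAt (fun s => a s p) (a t p / ζ p) t) (i j : ℤ) :
    HasDerivAt (fun s => Imom n ζ (a s) i j)
      (alphaM n ζ (a t) (i - 1) * alphaM n ζ (a t) (j - 1)) t := by
  have hζ₀ (p : Fin n) : ζ p ≠ 0 := fun h => hζ p p (by rw [h, add_zero])
  unfold Imom alphaM
  rw [sum_mul_sum]
  refine HasDerivAt.fun_sum fun p _ => HasDerivAt.fun_sum fun q _ =>
    (((ha p).mul (ha q)).const_mul _).congr_deriv ?_
  have hkernel : ((ζ p)⁻¹ + (ζ q)⁻¹) / (ζ p + ζ q) = (ζ p)⁻¹ * (ζ q)⁻¹ := by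
    rw [inv_add_inv (hζ₀ p) (hζ₀ q), div_right_comm, div_self (hζ p q), one_div, mul_inv]
  rw [zpow_sub_one₀ (hζ₀ p), zpow_sub_one₀ (hζ₀ q)]
  linear_combination ζ p ^ i * ζ q ^ j * (a t p * a t q) * hkernel

theorem hasDerivAt_aT (ζ a0 : Fin n → ℝ) (t : ℝ) (p : Fin n) :
    HasDerivAt (fun s => aT n ζ a0 s p) (aT n ζ a0 t p / ζ p) t :=
  ((((hasDerivAt_id t).div_const (ζ p)).exp).const_mul (a0 p)).congr_deriv <| by
    simp only [aT, id]
    ring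

theorem stmt_12_general {a : ℝ → Fin n → ℝ} {t : ℝ} (hζ : ∀ p q, ζ p + ζ q ≠ 0)
    (ha : ∀ p, HasDerivAt (fun s => a s p) (a t p / ζ p) t) (i j : ℤ) (k : ℕ) :
    HasDerivAt (fun s => Fdet n ζ (a s) i j k) (-(Edet n ζ (a t) i j (k + 1))) t := by
  simp only [Fdet_natCast, Edet_natCast_add_one]
  refine hasDerivAt_det_of_vecMulVec fun r s => ?_
  simpa only [momentVec, bimomentMatrix, of_apply, add_sub_right_comm] using
    hasDerivAt_Imom hζ ha (i + (r : ℕ)) (j + (s : ℕ))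

end Moments

/-- Lemma 2.10: under the evolution `a_p(t) = a_p(0) e^{t/ζ_p}`, for all `i, j ∈ ℤ`,
`k ≥ 0` and `t ∈ ℝ`, the function `t ↦ F_k^{(i,j)}(t)` is differentiable with
derivative `-E_{k+1}^{(i,j)}(t)`. -/
theorem stmt_12 (n : ℕ) (hn : 1 ≤ n) (ζ a0 : Fin n → ℝ)
    (hζ0 : ∀ p, 0 < ζ p) (hζmono : StrictMono ζ) (ha : ∀ p, 0 < a0 p)
    (i j k : ℤ) (hk : 0 ≤ k) (t : ℝ) :
    HasDerivAt (fun s => Fdet n ζ (aT n ζ a0 s) i j k)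
      (-(Edet n ζ (aT n ζ a0 t) i j (k + 1))) t := by
  lift k to ℕ using hk
  exact stmt_12_general (fun p q => (add_pos (hζ0 p) (hζ0 q)).ne') (hasDerivAt_aT ζ a0 t) i j k
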